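/- Every similar sublattice of L is the image of L under a mapping of the form x ↦ α p x p̃ with p ∈ 𝕀 an 𝕀-primitive icosian and α ∈ ℚ: if Λ is an SSL of L, then there exist an 𝕀-primitive p ∈ 𝕀 and α ∈ ℚ such that Λ = {α p x p̃ : x ∈ L}. -/

import Mathlib

/-!
A similarity `T` with `T(L) ⊆ L` can be replaced, since `L` is stable under conjugation, by one
for which `G(x) = T(x) T(1)⁻¹` is an algebra automorphism of `ℍ` (`unit_isometry`). As `L` spans
`ℍ(K)` over `K`, `G` preserves `ℍ(K)`, and an explicit Skolem–Noether average
`∑ₑ G(e) y ē` over `e = 1, i, j, k` gives `p ∈ ℍ(K)` with `G(x) = p x p⁻¹`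
(`exists_intertwiner`). Hence `T(x) = p x q` with `q ∈ ℍ(K)`.

The twist is a semilinear anti-automorphism of `ℍ(K)` that fixes `L` pointwise, so
`p x q = q̃ x p̃`. This makes `p̃ q⁻¹` central, so `q` is a real multiple `s p̃` of `p̃`, and
twisting `T(1) = s p p̃` shows `s ∈ ℚ` (`param_of_mul`).

Finally `𝔬` is norm-Euclidean, so the fractional ideal of all `α ∈ K` with `α p ∈ 𝕀` is principal,
and multiplying `p` by a generator `l` makes it `𝕀`-primitive (`exists_primitive`). This
rescaling changes `p x p̃` only by the rational factor `l l′`.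
-/

noncomputable section

open Quaternion

/-- Hamilton's quaternion algebra over `ℝ`. -/
abbrev HR := Quaternion ℝ

/-- the golden ratio `τ = (1+√5)/2`. -/
def tau : ℝ := (1 + Real.sqrt 5) / 2

/-- membership in the quadratic field `K = ℚ(√5)`, viewed inside `ℝ`. -/
def inK (x : ℝ) : Prop := ∃ q r : ℚ, x = (q : ℝ) + (r : ℝ) * Real.sqrt 5

/-- membership in the ring of integers `𝔬 = ℤ[τ]` of `K`, viewed inside `ℝ`. -/
def inO (x : ℝ) : Prop := ∃ m n : ℤ, x = (m : ℝ) + (n : ℝ) * tau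

/-- membership in `ℍ(K)`: all four components lie in `K`. -/
def inHK (q : HR) : Prop := inK q.re ∧ inK q.imI ∧ inK q.imJ ∧ inK q.imK

open scoped Classical in
/-- Galois conjugation `′` on `K = ℚ(√5)`, sending `q + r√5` to `q - r√5`
(extended by the identity off `K`; on `K` this is the usual Galois conjugation,
since the representation `x = q + r√5` with `q, r ∈ ℚ` is unique). -/
noncomputable def gal (x : ℝ) : ℝ :=
  if h : ∃ q r : ℚ, x = (q : ℝ) + (r : ℝ) * Real.sqrt 5 then
    ((h.choose : ℝ) - (h.choose_spec.choose : ℝ) * Real.sqrt 5)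
  else x

/-- the twist map `q = (a,b,c,d) ↦ q̃ = (a′,b′,d′,c′)` on `ℍ(K)`. -/
def twist (q : HR) : HR := ⟨gal q.re, gal q.imI, gal q.imK, gal q.imJ⟩

def v₁ : HR := ⟨1, 0, 0, 0⟩
def v₂ : HR := ⟨0, 1, 0, 0⟩
def v₃ : HR := ⟨1/2, 1/2, 1/2, 1/2⟩
def v₄ : HR := ⟨(1 - tau)/2, tau/2, 0, 1/2⟩

/-- membership in the icosian ring `𝕀`: the `𝔬`-span of
`(1,0,0,0)`, `(0,1,0,0)`, `½(1,1,1,1)`, `½(1−τ,τ,0,1)`. -/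
def inIcosian (q : HR) : Prop :=
  ∃ a b c d : ℝ, inO a ∧ inO b ∧ inO c ∧ inO d ∧
    q = a • v₁ + b • v₂ + c • v₃ + d • v₄

def w₁ : HR := ⟨1, 0, 0, 0⟩
def w₂ : HR := ⟨-(1/2), 1/2, 1/2, 1/2⟩
def w₃ : HR := ⟨0, -1, 0, 0⟩
def w₄ : HR := ⟨0, 1/2, (tau - 1)/2, -(tau/2)⟩

/-- the lattice `L` (a copy of the root lattice `A₄`): the `ℤ`-span of
`(1,0,0,0)`, `½(−1,1,1,1)`, `(0,−1,0,0)`, `½(0,1,τ−1,−τ)`. -/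
def Lsub : AddSubgroup HR :=
  (Submodule.span ℤ ({w₁, w₂, w₃, w₄} : Set HR)).toAddSubgroup

/-- `Λ` is a similar sublattice (SSL) of `L`: `Λ = α R(L) ⊆ L` for some
`α > 0` and a linear isometry `R` of `ℍ ≅ ℝ⁴`. -/
def IsSSL (Λ : AddSubgroup HR) : Prop :=
  ∃ (α : ℝ) (R : HR ≃ₗᵢ[ℝ] HR), 0 < α ∧
    (Λ : Set HR) = (fun x => α • R x) '' (Lsub : Set HR) ∧ Λ ≤ Lsub

/-- `p` is an `𝕀`-primitive icosian: `p ∈ 𝕀` and whenever `α ∈ K` with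
`α p ∈ 𝕀`, one has `α ∈ 𝔬`. -/
def IPrimitive (p : HR) : Prop :=
  inIcosian p ∧ ∀ α : ℝ, inK α → inIcosian (α • p) → inO α

/-- an icosian `q` is admissible when `|q q̃|` is a rational integer. -/
def Admissible (q : HR) : Prop := ∃ n : ℤ, ‖q * twist q‖ = (n : ℝ)

lemma inO_add {x y : ℝ} (hx : inO x) (hy : inO y) : inO (x + y) := by
  obtain ⟨m, n, rfl⟩ := hx; obtain ⟨m', n', rfl⟩ := hy
  exact ⟨m + m', n + n', by push_cast; ring⟩

lemma inO_neg {x : ℝ} (hx : inO x) : inO (-x) := by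
  obtain ⟨m, n, rfl⟩ := hx
  exact ⟨-m, -n, by push_cast; ring⟩

/-- the icosian ring `𝕀` as an additive subgroup of `ℍ`. -/
def Isub : AddSubgroup HR where
  carrier := {q | inIcosian q}
  zero_mem' := ⟨0, 0, 0, 0, ⟨0, 0, by push_cast; ring⟩, ⟨0, 0, by push_cast; ring⟩,
    ⟨0, 0, by push_cast; ring⟩, ⟨0, 0, by push_cast; ring⟩, by simp⟩
  add_mem' := by
    rintro x y ⟨a, b, c, d, ha, hb, hc, hd, rfl⟩ ⟨a', b', c', d', ha', hb', hc', hd', rfl⟩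
    exact ⟨a + a', b + b', c + c', d + d', inO_add ha ha', inO_add hb hb',
      inO_add hc hc', inO_add hd hd', by simp [add_smul]; abel⟩
  neg_mem' := by
    rintro x ⟨a, b, c, d, ha, hb, hc, hd, rfl⟩
    exact ⟨-a, -b, -c, -d, inO_neg ha, inO_neg hb, inO_neg hc, inO_neg hd,
      by simp [neg_smul]; abel⟩

/-- the additive map `x ↦ p x p̃`. -/
def conjHom (p : HR) : HR →+ HR :=
  AddMonoidHom.mk' (fun x => p * x * twist p) (fun a b => by simp [mul_add, add_mul])

/-- the additive map `x ↦ (1/|q q̃|) · q x q̃`. -/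
def cslHom (q : HR) : HR →+ HR :=
  AddMonoidHom.mk' (fun x => (1 / ‖q * twist q‖) • (q * x * twist q))
    (fun a b => by simp [mul_add, add_mul, smul_add])

/-- the subgroup `L ∩ (1/|q q̃|) · q L q̃` of `ℍ`. -/
def cslSub (q : HR) : AddSubgroup HR := Lsub ⊓ Lsub.map (cslHom q)

/-- for a rotation `R`, the subgroup `Γ ∩ R(Γ)`. -/
def cslOf (Γ : AddSubgroup HR) (R : HR ≃ₗᵢ[ℝ] HR) : AddSubgroup HR :=
  Γ ⊓ Γ.map R.toLinearEquiv.toLinearMap.toAddMonoidHom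

/-- the standard Euclidean inner product on `ℍ ≅ ℝ⁴`. -/
def dot (x y : HR) : ℝ := x.re * y.re + x.imI * y.imI + x.imJ * y.imJ + x.imK * y.imK

/-- the dual lattice `L* = {x ∈ ℍ : ⟨x|y⟩ ∈ ℤ for all y ∈ L}`. -/
def Ldual : AddSubgroup HR where
  carrier := {x | ∀ y ∈ Lsub, ∃ n : ℤ, dot x y = n}
  zero_mem' := by intro y _; exact ⟨0, by simp [dot]⟩
  add_mem' := by
    intro a b ha hb y hy
    obtain ⟨m, hm⟩ := ha y hy; obtain ⟨n, hn⟩ := hb y hy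
    refine ⟨m + n, ?_⟩
    have : dot (a + b) y = dot a y + dot b y := by simp [dot]; ring
    rw [this, hm, hn]; push_cast; ring
  neg_mem' := by
    intro a ha y hy
    obtain ⟨m, hm⟩ := ha y hy
    refine ⟨-m, ?_⟩
    have : dot (-a) y = -dot a y := by simp [dot]; ring
    rw [this, hm]; push_cast; ring

/-! ### Components of the explicit quaternions -/

/-- The quaternion unit `i`. -/
def qi : HR := ⟨0, 1, 0, 0⟩
/-- The quaternion unit `j`. -/
def qj : HR := ⟨0, 0, 1, 0⟩
/-- The quaternion unit `k`. -/
def qk : HR := ⟨0, 0, 0, 1⟩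

@[simp] lemma v₁_comp : v₁.re = 1 ∧ v₁.imI = 0 ∧ v₁.imJ = 0 ∧ v₁.imK = 0 :=
  ⟨rfl, rfl, rfl, rfl⟩
@[simp] lemma v₂_comp : v₂.re = 0 ∧ v₂.imI = 1 ∧ v₂.imJ = 0 ∧ v₂.imK = 0 :=
  ⟨rfl, rfl, rfl, rfl⟩
@[simp] lemma v₃_comp : v₃.re = 1 / 2 ∧ v₃.imI = 1 / 2 ∧ v₃.imJ = 1 / 2 ∧ v₃.imK = 1 / 2 :=
  ⟨rfl, rfl, rfl, rfl⟩
@[simp] lemma v₄_comp :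
    v₄.re = (1 - tau) / 2 ∧ v₄.imI = tau / 2 ∧ v₄.imJ = 0 ∧ v₄.imK = 1 / 2 :=
  ⟨rfl, rfl, rfl, rfl⟩
@[simp] lemma w₁_comp : w₁.re = 1 ∧ w₁.imI = 0 ∧ w₁.imJ = 0 ∧ w₁.imK = 0 :=
  ⟨rfl, rfl, rfl, rfl⟩
@[simp] lemma w₂_comp : w₂.re = -(1 / 2) ∧ w₂.imI = 1 / 2 ∧ w₂.imJ = 1 / 2 ∧ w₂.imK = 1 / 2 :=
  ⟨rfl, rfl, rfl, rfl⟩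
@[simp] lemma w₃_comp : w₃.re = 0 ∧ w₃.imI = -1 ∧ w₃.imJ = 0 ∧ w₃.imK = 0 :=
  ⟨rfl, rfl, rfl, rfl⟩
@[simp] lemma w₄_comp :
    w₄.re = 0 ∧ w₄.imI = 1 / 2 ∧ w₄.imJ = (tau - 1) / 2 ∧ w₄.imK = -(tau / 2) :=
  ⟨rfl, rfl, rfl, rfl⟩
@[simp] lemma qi_comp : qi.re = 0 ∧ qi.imI = 1 ∧ qi.imJ = 0 ∧ qi.imK = 0 :=
  ⟨rfl, rfl, rfl, rfl⟩
@[simp] lemma qj_comp : qj.re = 0 ∧ qj.imI = 0 ∧ qj.imJ = 1 ∧ qj.imK = 0 :=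
  ⟨rfl, rfl, rfl, rfl⟩
@[simp] lemma qk_comp : qk.re = 0 ∧ qk.imI = 0 ∧ qk.imJ = 0 ∧ qk.imK = 1 :=
  ⟨rfl, rfl, rfl, rfl⟩
@[simp] lemma twist_comp (q : HR) : (twist q).re = gal q.re ∧ (twist q).imI = gal q.imI ∧
    (twist q).imJ = gal q.imK ∧ (twist q).imK = gal q.imJ :=
  ⟨rfl, rfl, rfl, rfl⟩

/-! ### Arithmetic of `K` and primitive icosians -/

lemma K_ext {a b c d : ℚ} (h : (a : ℝ) + b * Real.sqrt 5 = c + d * Real.sqrt 5) :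
    a = c ∧ b = d := by
  have hirr : Irrational (Real.sqrt 5) := by
    have := Nat.Prime.irrational_sqrt (p := 5) (by norm_num)
    simpa using this
  have hbd : b = d := by
    by_contra hne
    have hne' : ((b - d : ℚ) : ℝ) ≠ 0 := by exact_mod_cast sub_ne_zero.mpr hne
    apply hirr
    refine ⟨(c - a) / (b - d), ?_⟩
    push_cast at hne' ⊢
    rw [div_eq_iff hne']
    linarith
  refine ⟨?_, hbd⟩
  subst hbd
  have : (a : ℝ) = c := by linarith
  exact_mod_cast this

lemma gal_mk (q r : ℚ) : gal ((q : ℝ) + r * Real.sqrt 5) = q - r * Real.sqrt 5 := by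
  have h : ∃ q' r' : ℚ, (q : ℝ) + r * Real.sqrt 5 = (q' : ℝ) + (r' : ℝ) * Real.sqrt 5 :=
    ⟨q, r, rfl⟩
  unfold gal
  rw [dif_pos h]
  obtain ⟨h1, h2⟩ := K_ext h.choose_spec.choose_spec
  have h1' : (h.choose : ℝ) = q := by exact_mod_cast h1.symm
  have h2' : (h.choose_spec.choose : ℝ) = r := by exact_mod_cast h2.symm
  exact congrArg₂ (fun s t : ℝ => s - t * Real.sqrt 5) h1' h2'

lemma sqrt5_sq : Real.sqrt 5 * Real.sqrt 5 = 5 := Real.mul_self_sqrt (by norm_num)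

lemma inK_rat (q : ℚ) : inK (q : ℝ) := ⟨q, 0, by simp⟩

lemma inK_sqrt5 : inK (Real.sqrt 5) := ⟨0, 1, by simp⟩

lemma inK_add {x y : ℝ} (hx : inK x) (hy : inK y) : inK (x + y) := by
  obtain ⟨a, b, rfl⟩ := hx; obtain ⟨c, d, rfl⟩ := hy
  exact ⟨a + c, b + d, by push_cast; ring⟩

lemma inK_neg {x : ℝ} (hx : inK x) : inK (-x) := by
  obtain ⟨a, b, rfl⟩ := hx
  exact ⟨-a, -b, by push_cast; ring⟩

lemma inK_sub {x y : ℝ} (hx : inK x) (hy : inK y) : inK (x - y) := by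
  rw [sub_eq_add_neg]; exact inK_add hx (inK_neg hy)

lemma inK_mul {x y : ℝ} (hx : inK x) (hy : inK y) : inK (x * y) := by
  obtain ⟨a, b, rfl⟩ := hx; obtain ⟨c, d, rfl⟩ := hy
  refine ⟨a * c + 5 * (b * d), a * d + b * c, ?_⟩
  push_cast
  linear_combination (b : ℝ) * d * sqrt5_sq

lemma gal_rat (q : ℚ) : gal (q : ℝ) = q := by simpa using gal_mk q 0

lemma gal_add {x y : ℝ} (hx : inK x) (hy : inK y) : gal (x + y) = gal x + gal y := by
  obtain ⟨a, b, rfl⟩ := hx; obtain ⟨c, d, rfl⟩ := hy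
  have := gal_mk (a + c) (b + d)
  rw [gal_mk, gal_mk]
  push_cast at this
  rw [show (a : ℝ) + b * Real.sqrt 5 + (c + d * Real.sqrt 5)
    = a + c + (b + d) * Real.sqrt 5 by ring, this]
  ring

lemma gal_neg {x : ℝ} (hx : inK x) : gal (-x) = -gal x := by
  obtain ⟨a, b, rfl⟩ := hx
  have := gal_mk (-a) (-b)
  rw [gal_mk]
  push_cast at this
  rw [show -((a : ℝ) + b * Real.sqrt 5) = -a + -b * Real.sqrt 5 by ring, this]
  ring

lemma gal_sub {x y : ℝ} (hx : inK x) (hy : inK y) : gal (x - y) = gal x - gal y := by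
  rw [sub_eq_add_neg, gal_add hx (inK_neg hy), gal_neg hy, sub_eq_add_neg]

lemma gal_mul {x y : ℝ} (hx : inK x) (hy : inK y) : gal (x * y) = gal x * gal y := by
  obtain ⟨a, b, rfl⟩ := hx; obtain ⟨c, d, rfl⟩ := hy
  have := gal_mk (a * c + 5 * (b * d)) (a * d + b * c)
  rw [gal_mk, gal_mk]
  push_cast at this
  rw [show ((a : ℝ) + b * Real.sqrt 5) * (c + d * Real.sqrt 5)
    = a * c + 5 * (b * d) + (a * d + b * c) * Real.sqrt 5 by
      linear_combination (b : ℝ) * d * sqrt5_sq, this]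
  linear_combination -(b : ℝ) * d * sqrt5_sq

lemma inK_gal {x : ℝ} (hx : inK x) : inK (gal x) := by
  obtain ⟨a, b, rfl⟩ := hx
  rw [gal_mk]
  exact ⟨a, -b, by push_cast; ring⟩

lemma gal_gal {x : ℝ} (hx : inK x) : gal (gal x) = x := by
  obtain ⟨a, b, rfl⟩ := hx
  have := gal_mk a (-b)
  push_cast at this
  rw [gal_mk, show (a : ℝ) - b * Real.sqrt 5 = a + -b * Real.sqrt 5 by ring, this]
  ring

lemma gal_ne_zero {x : ℝ} (hx : inK x) (h0 : x ≠ 0) : gal x ≠ 0 := by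
  intro h
  apply h0
  rw [← gal_gal hx, h]
  simpa using gal_rat 0

lemma rat_of_gal_eq {x : ℝ} (hx : inK x) (h : gal x = x) : ∃ q : ℚ, x = q := by
  obtain ⟨a, b, rfl⟩ := hx
  rw [gal_mk] at h
  refine ⟨a, ?_⟩
  linarith

/-- The field norm `x x′` of an element of `K` is rational. -/
lemma norm_rat {x : ℝ} (hx : inK x) : ∃ q : ℚ, x * gal x = q := by
  apply rat_of_gal_eq (inK_mul hx (inK_gal hx))
  rw [gal_mul hx (inK_gal hx), gal_gal hx, mul_comm]

lemma inK_inv {x : ℝ} (hx : inK x) : inK x⁻¹ := by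
  by_cases h0 : x = 0
  · subst h0; simpa using inK_rat 0
  obtain ⟨q, hq⟩ := norm_rat hx
  have hg := gal_ne_zero hx h0
  have : x⁻¹ = ((q⁻¹ : ℚ) : ℝ) * gal x := by
    push_cast
    rw [← hq]
    field_simp
  rw [this]
  exact inK_mul (inK_rat _) (inK_gal hx)

lemma inK_div {x y : ℝ} (hx : inK x) (hy : inK y) : inK (x / y) := by
  rw [div_eq_mul_inv]; exact inK_mul hx (inK_inv hy)

lemma inK_tau : inK tau := ⟨1/2, 1/2, by unfold tau; push_cast; ring⟩

lemma gal_tau : gal tau = 1 - tau := by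
  have := gal_mk (1/2) (1/2)
  rw [show tau = ((1/2 : ℚ) : ℝ) + (1/2 : ℚ) * Real.sqrt 5 by unfold tau; push_cast; ring, this]
  push_cast; ring

lemma tau_sq : tau * tau = tau + 1 := by
  unfold tau
  linear_combination (1/4 : ℝ) * sqrt5_sq

lemma inK_of_inO {x : ℝ} (hx : inO x) : inK x := by
  obtain ⟨m, n, rfl⟩ := hx
  exact inK_add (by exact_mod_cast inK_rat m) (inK_mul (by exact_mod_cast inK_rat n) inK_tau)

lemma inO_mul {x y : ℝ} (hx : inO x) (hy : inO y) : inO (x * y) := by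
  obtain ⟨a, b, rfl⟩ := hx; obtain ⟨c, d, rfl⟩ := hy
  refine ⟨a * c + b * d, a * d + b * c + b * d, ?_⟩
  push_cast
  linear_combination (b : ℝ) * d * tau_sq

lemma gal_O (m n : ℤ) : gal ((m : ℝ) + n * tau) = m + n * (1 - tau) := by
  have hm := gal_rat m
  have hn := gal_rat n
  have km := inK_rat m
  have kn := inK_rat n
  push_cast at hm hn km kn
  rw [gal_add km (inK_mul kn inK_tau), gal_mul kn inK_tau, gal_tau, hm, hn]

lemma norm_int {x : ℝ} (hx : inO x) : ∃ n : ℤ, x * gal x = n := by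
  obtain ⟨a, b, rfl⟩ := hx
  refine ⟨a * a + a * b - b * b, ?_⟩
  rw [gal_O]
  push_cast
  linear_combination -(b : ℝ) * b * tau_sq

/-- `𝔬` is norm-Euclidean: rounding the coordinates with respect to `1, τ` to the nearest
integers leaves a remainder of norm at most `5/16`. -/
lemma euclid {x : ℝ} (hx : inK x) : ∃ m : ℝ, inO m ∧ |(x - m) * gal (x - m)| < 1 := by
  obtain ⟨a, b, rfl⟩ := hx
  -- `a + b√5 = (a - b) + 2bτ`
  refine ⟨(round (a - b) : ℤ) + (round (2 * b) : ℤ) * tau, ⟨_, _, rfl⟩, ?_⟩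
  set u : ℚ := (a - b) - round (a - b) with hu
  set v : ℚ := 2 * b - round (2 * b) with hv
  have hu1 : |u| ≤ 1/2 := abs_sub_round _
  have hv1 : |v| ≤ 1/2 := abs_sub_round _
  have e : (a : ℝ) + b * Real.sqrt 5 - ((round (a - b) : ℤ) + (round (2 * b) : ℤ) * tau)
      = ((u + v / 2 : ℚ) : ℝ) + (v / 2 : ℚ) * Real.sqrt 5 := by
    rw [hu, hv]; unfold tau; push_cast; ring
  rw [e, gal_mk]
  have e2 : (((u + v / 2 : ℚ) : ℝ) + (v / 2 : ℚ) * Real.sqrt 5) *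
      (((u + v / 2 : ℚ) : ℝ) - (v / 2 : ℚ) * Real.sqrt 5) = ((u * u + u * v - v * v : ℚ) : ℝ) := by
    push_cast
    linear_combination -((v : ℝ) / 2) * (v / 2) * sqrt5_sq
  rw [e2]
  have : |u * u + u * v - v * v| < 1 := by
    rw [abs_le] at hu1 hv1
    rw [abs_lt]
    constructor <;> nlinarith
  exact_mod_cast this

lemma exists_denom {x : ℝ} (hx : inK x) : ∃ n : ℤ, n ≠ 0 ∧ inO (n * x) := by
  obtain ⟨a, b, rfl⟩ := hx
  refine ⟨a.den * b.den, by simp, a.num * b.den - b.num * a.den, 2 * (b.num * a.den), ?_⟩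
  have ha : (a : ℝ) * a.den = a.num := by exact_mod_cast Rat.mul_den_eq_num a
  have hb : (b : ℝ) * b.den = b.num := by exact_mod_cast Rat.mul_den_eq_num b
  unfold tau
  push_cast
  rw [← ha, ← hb]
  ring

lemma inO_int (n : ℤ) : inO n := ⟨n, 0, by simp⟩

/-- Coordinates of a quaternion with respect to the `𝔬`-basis of `𝕀`. -/
lemma icosian_iff (q : HR) : inIcosian q ↔
    inO (q.re - q.imJ - (q.imK - q.imJ) * (1 - tau)) ∧
    inO (q.imI - q.imJ - (q.imK - q.imJ) * tau) ∧
    inO (2 * q.imJ) ∧ inO (2 * (q.imK - q.imJ)) := by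
  constructor
  · rintro ⟨a, b, c, d, ha, hb, hc, hd, rfl⟩
    refine ⟨?_, ?_, ?_, ?_⟩
    · convert ha using 1; simp; ring
    · convert hb using 1; simp; ring
    · convert hc using 1; simp; ring
    · convert hd using 1; simp; ring
  · rintro ⟨ha, hb, hc, hd⟩
    refine ⟨_, _, _, _, ha, hb, hc, hd, ?_⟩
    apply Quaternion.ext <;> simp <;> ring

lemma icosian_smul {a : ℝ} {q : HR} (ha : inO a) (hq : inIcosian q) : inIcosian (a • q) := by
  obtain ⟨x, y, z, w, hx, hy, hz, hw, rfl⟩ := hq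
  exact ⟨a * x, a * y, a * z, a * w, inO_mul ha hx, inO_mul ha hy, inO_mul ha hz, inO_mul ha hw,
    by simp [smul_smul]⟩

lemma icosian_sub {p q : HR} (hp : inIcosian p) (hq : inIcosian q) : inIcosian (p - q) :=
  Isub.sub_mem (x := p) (y := q) hp hq

lemma exists_clear {p : HR} (hp : inHK p) : ∃ n : ℤ, n ≠ 0 ∧ inIcosian ((n : ℝ) • p) := by
  obtain ⟨h0, h1, h2, h3⟩ := hp
  have k1 : inK 1 := by exact_mod_cast inK_rat 1
  have k2 : inK 2 := by exact_mod_cast inK_rat 2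
  have h32 := inK_sub h3 h2
  obtain ⟨a, ha, oa⟩ := exists_denom
    (inK_sub (inK_sub h0 h2) (inK_mul h32 (inK_sub k1 inK_tau)))
  obtain ⟨b, hb, ob⟩ := exists_denom (inK_sub (inK_sub h1 h2) (inK_mul h32 inK_tau))
  obtain ⟨c, hc, oc⟩ := exists_denom (inK_mul k2 h2)
  obtain ⟨d, hd, od⟩ := exists_denom (inK_mul k2 h32)
  refine ⟨a * b * c * d, by simp [ha, hb, hc, hd], ?_⟩
  rw [icosian_iff]
  refine ⟨?_, ?_, ?_, ?_⟩
  · convert inO_mul (inO_int (b * c * d)) oa using 1; simp; ring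
  · convert inO_mul (inO_int (a * c * d)) ob using 1; simp; ring
  · convert inO_mul (inO_int (a * b * d)) oc using 1; simp; ring
  · convert inO_mul (inO_int (a * b * c)) od using 1; simp; ring

/-- Some coordinate `t` of `p` in the basis of `𝕀` is nonzero; multipliers of `p` into `𝕀`
multiply `t` into `𝔬`. -/
lemma exists_coord {p : HR} (hp : inHK p) (h0 : p ≠ 0) :
    ∃ t : ℝ, inK t ∧ t ≠ 0 ∧ ∀ α : ℝ, inIcosian (α • p) → inO (α * t) := by
  by_contra hcon
  push Not at hcon
  obtain ⟨k0, k1, k2, k3⟩ := hp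
  have kone : inK 1 := by exact_mod_cast inK_rat 1
  have ktwo : inK 2 := by exact_mod_cast inK_rat 2
  have k32 := inK_sub k3 k2
  have e2 : 2 * p.imJ = 0 := by
    by_contra hne
    obtain ⟨α, h, h'⟩ := hcon _ (inK_mul ktwo k2) hne
    apply h'
    convert ((icosian_iff _).1 h).2.2.1 using 1; simp; ring
  have e3 : 2 * (p.imK - p.imJ) = 0 := by
    by_contra hne
    obtain ⟨α, h, h'⟩ := hcon _ (inK_mul ktwo k32) hne
    apply h'
    convert ((icosian_iff _).1 h).2.2.2 using 1; simp; ring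
  have e0 : p.re - p.imJ - (p.imK - p.imJ) * (1 - tau) = 0 := by
    by_contra hne
    obtain ⟨α, h, h'⟩ := hcon _
      (inK_sub (inK_sub k0 k2) (inK_mul k32 (inK_sub kone inK_tau))) hne
    apply h'
    convert ((icosian_iff _).1 h).1 using 1; simp; ring
  have e1 : p.imI - p.imJ - (p.imK - p.imJ) * tau = 0 := by
    by_contra hne
    obtain ⟨α, h, h'⟩ := hcon _ (inK_sub (inK_sub k1 k2) (inK_mul k32 inK_tau)) hne
    apply h'
    convert ((icosian_iff _).1 h).2.1 using 1; simp; ring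
  have f2 : p.imJ = 0 := by linarith
  have f3 : p.imK = 0 := by linarith
  apply h0
  rw [f2, f3] at e0 e1
  apply Quaternion.ext
  · simpa using e0
  · simpa using e1
  · simpa using f2
  · simpa using f3

/-- Every nonzero element of `ℍ(K)` has an `𝕀`-primitive `K`-multiple. The multipliers of `p`
into `𝕀` form a fractional ideal of `𝔬`; an element of minimal norm generates it. -/
lemma exists_primitive {p : HR} (hp : inHK p) (h0 : p ≠ 0) :
    ∃ l : ℝ, inK l ∧ l ≠ 0 ∧ IPrimitive (l • p) := by
  obtain ⟨t, kt, ht, hmul⟩ := exists_coord hp h0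
  have hnat : ∀ α : ℝ, inIcosian (α • p) → ∃ n : ℕ, |α * t * gal (α * t)| = n := by
    intro α hα
    obtain ⟨n, hn⟩ := norm_int (hmul α hα)
    exact ⟨n.natAbs, by rw [hn, Nat.cast_natAbs]; simp⟩
  let P : ℕ → Prop := fun n => ∃ α : ℝ, inK α ∧ α ≠ 0 ∧ inIcosian (α • p) ∧
    |α * t * gal (α * t)| = n
  have hex : ∃ n, P n := by
    obtain ⟨n, hn, hi⟩ := exists_clear hp
    obtain ⟨m, hm⟩ := hnat _ hi
    exact ⟨m, n, by exact_mod_cast inK_rat n, by exact_mod_cast hn, hi, hm⟩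
  classical
  obtain ⟨l, kl, hl, il, hN⟩ := Nat.find_spec hex
  have hmin : ∀ m, P m → Nat.find hex ≤ m := fun m hm => Nat.find_min' hex hm
  refine ⟨l, kl, hl, il, ?_⟩
  intro α kα hα
  obtain ⟨μ, oμ, hμ⟩ := euclid kα
  by_cases hz : α - μ = 0
  · rwa [sub_eq_zero.1 hz]
  exfalso
  have kr : inK (α - μ) := inK_sub kα (inK_of_inO oμ)
  have hr : inIcosian (((α - μ) * l) • p) := by
    rw [mul_smul, sub_smul]
    exact icosian_sub hα (icosian_smul oμ il)
  obtain ⟨m, hm⟩ := hnat _ hr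
  have hle := hmin m ⟨_, inK_mul kr kl, mul_ne_zero hz hl, hr, hm⟩
  have hle' : |l * t * gal (l * t)| ≤ |(α - μ) * l * t * gal ((α - μ) * l * t)| := by
    rw [hN, hm]; exact_mod_cast hle
  have klt := inK_mul kl kt
  have hpos : 0 < |l * t * gal (l * t)| :=
    abs_pos.2 (mul_ne_zero (mul_ne_zero hl ht) (gal_ne_zero klt (mul_ne_zero hl ht)))
  rw [mul_assoc (α - μ), gal_mul kr klt,
    show (α - μ) * (l * t) * (gal (α - μ) * gal (l * t))
      = (α - μ) * gal (α - μ) * (l * t * gal (l * t)) by ring,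
    abs_mul ((α - μ) * gal (α - μ))] at hle'
  nlinarith

/-! ### The twist on `ℍ(K)` and the lattice `L` -/

lemma HK_add {p q : HR} (hp : inHK p) (hq : inHK q) : inHK (p + q) := by
  obtain ⟨a, b, c, d⟩ := hp; obtain ⟨a', b', c', d'⟩ := hq
  exact ⟨inK_add a a', inK_add b b', inK_add c c', inK_add d d'⟩

lemma HK_neg {p : HR} (hp : inHK p) : inHK (-p) := by
  obtain ⟨a, b, c, d⟩ := hp
  exact ⟨inK_neg a, inK_neg b, inK_neg c, inK_neg d⟩

lemma HK_sub {p q : HR} (hp : inHK p) (hq : inHK q) : inHK (p - q) := by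
  rw [sub_eq_add_neg]; exact HK_add hp (HK_neg hq)

lemma HK_smul {a : ℝ} {p : HR} (ha : inK a) (hp : inHK p) : inHK (a • p) := by
  obtain ⟨h0, h1, h2, h3⟩ := hp
  refine ⟨?_, ?_, ?_, ?_⟩ <;> simp <;> apply inK_mul <;> assumption

lemma HK_mul {p q : HR} (hp : inHK p) (hq : inHK q) : inHK (p * q) := by
  obtain ⟨a, b, c, d⟩ := hp; obtain ⟨a', b', c', d'⟩ := hq
  refine ⟨?_, ?_, ?_, ?_⟩ <;> simp <;>
    repeat' first | assumption | apply inK_add | apply inK_sub | apply inK_mul | apply inK_neg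

lemma HK_star {p : HR} (hp : inHK p) : inHK (star p) := by
  obtain ⟨a, b, c, d⟩ := hp
  refine ⟨?_, ?_, ?_, ?_⟩ <;> simp <;> first | assumption | (apply inK_neg; assumption)

lemma HK_inv {p : HR} (hp : inHK p) : inHK p⁻¹ := by
  rw [Quaternion.inv_def]
  apply HK_smul _ (HK_star hp)
  apply inK_inv
  rw [Quaternion.normSq_def']
  obtain ⟨a, b, c, d⟩ := hp
  simp only [sq]
  repeat' first | assumption | apply inK_add | apply inK_mul

lemma twist_mul {p q : HR} (hp : inHK p) (hq : inHK q) :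
    twist (p * q) = twist q * twist p := by
  obtain ⟨a, b, c, d⟩ := hp; obtain ⟨a', b', c', d'⟩ := hq
  apply Quaternion.ext <;> simp only [twist_comp, Quaternion.re_mul, Quaternion.imI_mul,
    Quaternion.imJ_mul, Quaternion.imK_mul]
  all_goals
    simp (maxDischargeDepth := 8) only [gal_add, gal_sub, gal_mul, inK_mul, inK_add,
      inK_sub, a, b, c, d, a', b', c', d']
    ring

lemma twist_add {p q : HR} (hp : inHK p) (hq : inHK q) :
    twist (p + q) = twist p + twist q := by
  obtain ⟨a, b, c, d⟩ := hp; obtain ⟨a', b', c', d'⟩ := hq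
  apply Quaternion.ext <;> simp [gal_add, *]

lemma twist_neg {p : HR} (hp : inHK p) : twist (-p) = -twist p := by
  obtain ⟨a, b, c, d⟩ := hp
  apply Quaternion.ext <;> simp [gal_neg, *]

lemma twist_smul {a : ℝ} {p : HR} (ha : inK a) (hp : inHK p) :
    twist (a • p) = gal a • twist p := by
  obtain ⟨h0, h1, h2, h3⟩ := hp
  apply Quaternion.ext <;> simp [gal_mul, *]

lemma HK_twist {p : HR} (hp : inHK p) : inHK (twist p) := by
  obtain ⟨h0, h1, h2, h3⟩ := hp
  exact ⟨inK_gal h0, inK_gal h1, inK_gal h3, inK_gal h2⟩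

lemma twist_twist {p : HR} (hp : inHK p) : twist (twist p) = p := by
  obtain ⟨h0, h1, h2, h3⟩ := hp
  apply Quaternion.ext <;> simp [gal_gal, *]

lemma gal_zero : gal 0 = 0 := by simpa using gal_rat 0

lemma twist_zero : twist 0 = 0 := by
  apply Quaternion.ext <;> simp [gal_zero]

lemma twist_ne_zero {p : HR} (hp : inHK p) (h0 : p ≠ 0) : twist p ≠ 0 := by
  intro h
  apply h0
  rw [← twist_twist hp, h, twist_zero]

lemma inK_zero : inK 0 := by simpa using inK_rat 0
lemma inK_one : inK 1 := by simpa using inK_rat 1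
lemma inK_half : inK (1 / 2) := by simpa using inK_rat (1 / 2)
lemma gal_one : gal 1 = 1 := by simpa using gal_rat 1
lemma gal_half : gal (1 / 2) = 1 / 2 := by simpa using gal_rat (1 / 2)

lemma L_gens_fixed {x : HR} (hx : x ∈ ({w₁, w₂, w₃, w₄} : Set HR)) :
    inHK x ∧ twist x = x := by
  have kτ : inK (tau / 2) := by
    rw [div_eq_mul_one_div]; exact inK_mul inK_tau inK_half
  have kτ' : inK ((tau - 1) / 2) := by
    rw [div_eq_mul_one_div]; exact inK_mul (inK_sub inK_tau inK_one) inK_half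
  have gτ : gal (tau / 2) = (1 - tau) / 2 := by
    rw [div_eq_mul_one_div, gal_mul inK_tau inK_half, gal_tau, gal_half]; ring
  have gτ' : gal ((tau - 1) / 2) = - (tau / 2) := by
    rw [div_eq_mul_one_div, gal_mul (inK_sub inK_tau inK_one) inK_half,
      gal_sub inK_tau inK_one, gal_tau, gal_half, gal_one]; ring
  rcases hx with rfl | rfl | rfl | rfl
  · refine ⟨⟨inK_one, inK_zero, inK_zero, inK_zero⟩, ?_⟩
    apply Quaternion.ext <;> simp only [twist_comp, w₁_comp, gal_one, gal_zero]
  · refine ⟨⟨inK_neg inK_half, inK_half, inK_half, inK_half⟩, ?_⟩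
    apply Quaternion.ext <;> simp only [twist_comp, w₂_comp, gal_half, gal_neg inK_half]
  · refine ⟨⟨inK_zero, inK_neg inK_one, inK_zero, inK_zero⟩, ?_⟩
    apply Quaternion.ext <;> simp only [twist_comp, w₃_comp, gal_one, gal_zero, gal_neg inK_one]
  · refine ⟨⟨inK_zero, inK_half, kτ', inK_neg kτ⟩, ?_⟩
    apply Quaternion.ext <;> simp only [twist_comp, w₄_comp, gal_zero, gal_half, gal_neg kτ, gτ, gτ']
    ring

/-- `L` consists of elements of `ℍ(K)` fixed by the twist. -/
lemma L_fixed {x : HR} (hx : x ∈ Lsub) : inHK x ∧ twist x = x := by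
  change x ∈ Submodule.span ℤ ({w₁, w₂, w₃, w₄} : Set HR) at hx
  induction hx using Submodule.span_induction with
  | mem x h => exact L_gens_fixed h
  | zero => exact ⟨⟨inK_zero, inK_zero, inK_zero, inK_zero⟩, twist_zero⟩
  | add x y hx hy ihx ihy =>
    obtain ⟨a, b⟩ := ihx
    obtain ⟨a', b'⟩ := ihy
    exact ⟨HK_add a a', by rw [twist_add a a', b, b']⟩
  | smul n x hx ih =>
    obtain ⟨a, b⟩ := ih
    have kn : inK (n : ℝ) := by exact_mod_cast inK_rat n
    have gn : gal (n : ℝ) = n := by exact_mod_cast gal_rat n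
    rw [← Int.cast_smul_eq_zsmul ℝ]
    exact ⟨HK_smul kn a, by rw [twist_smul kn a, b, gn]⟩

lemma w_mem {x : HR} (hx : x ∈ ({w₁, w₂, w₃, w₄} : Set HR)) : x ∈ Lsub :=
  Submodule.subset_span (R := ℤ) hx

lemma star_mem_L {x : HR} (hx : x ∈ Lsub) : star x ∈ Lsub := by
  change x ∈ Submodule.span ℤ ({w₁, w₂, w₃, w₄} : Set HR) at hx
  have m1 : w₁ ∈ Lsub := w_mem (by simp)
  have m2 : w₂ ∈ Lsub := w_mem (by simp)
  have m3 : w₃ ∈ Lsub := w_mem (by simp)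
  have m4 : w₄ ∈ Lsub := w_mem (by simp)
  induction hx using Submodule.span_induction with
  | mem x h =>
    rcases h with rfl | rfl | rfl | rfl
    · have : star w₁ = w₁ := by apply Quaternion.ext <;> simp
      rwa [this]
    · have : star w₂ = -w₁ - w₂ := by
        apply Quaternion.ext <;> simp
        norm_num
      rw [this]; exact Lsub.sub_mem (Lsub.neg_mem m1) m2
    · have : star w₃ = -w₃ := by apply Quaternion.ext <;> simp
      rw [this]; exact Lsub.neg_mem m3
    · have : star w₄ = -w₄ := by apply Quaternion.ext <;> simp
      rw [this]; exact Lsub.neg_mem m4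
  | zero => simp
  | add x y hx hy ihx ihy => rw [star_add]; exact Lsub.add_mem (ihx) (ihy)
  | smul n x hx ih => rw [star_zsmul]; exact Lsub.zsmul_mem (ih) n

/-! ### Isometries of `ℍ` and intertwiners -/

lemma q_decomp (x : HR) : x = x.re • (1 : HR) + x.imI • qi + x.imJ • qj + x.imK • qk := by
  apply Quaternion.ext <;> simp

lemma qi_sq : qi * qi = -1 := by apply Quaternion.ext <;> simp
lemma qj_sq : qj * qj = -1 := by apply Quaternion.ext <;> simp
lemma qj_qi : qj * qi = -(qi * qj) := by apply Quaternion.ext <;> simp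
lemma qi_qj : qi * qj = qk := by apply Quaternion.ext <;> simp

/-- The sum `∑ₑ G(e) y ē` over `e = 1, i, j, k`, for the multiplicative map `G` with `i ↦ I`,
`j ↦ J`; the conjugates of `i, j, k = i j` are written `-i, -j, j i`. -/
def avg {A : Type*} [Ring A] (I J i j y : A) : A :=
  y - I * y * i - J * y * j + I * J * y * (j * i)

section avg
variable {A : Type*} [Ring A] {I J i j : A}

lemma avg_I (hI : I * I = -1) (hi : i * i = -1) (y : A) :
    I * avg I J i j y = avg I J i j y * i := by
  have h1 : ∀ z, I * (I * z) = -z := fun z => by rw [← mul_assoc, hI]; simp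
  simp only [avg, mul_sub, sub_mul, mul_add, add_mul, mul_assoc, hi, h1, mul_neg, mul_one]
  abel

lemma avg_J (hJ : J * J = -1) (hj : j * j = -1) (hJI : J * I = -(I * J))
    (hji : j * i = -(i * j)) (y : A) :
    J * avg I J i j y = avg I J i j y * j := by
  have h1 : ∀ z, J * (J * z) = -z := fun z => by rw [← mul_assoc, hJ]; simp
  have h2 : ∀ z, J * (I * z) = -(I * (J * z)) := fun z => by
    rw [← mul_assoc, hJI, neg_mul, mul_assoc]
  simp only [avg, mul_sub, sub_mul, mul_add, add_mul, mul_assoc, hji, hj, h1, h2, mul_neg,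
    neg_mul, mul_one, neg_neg]
  abel

/-- An orthogonality relation; when `4 ≠ 0` it shows that the four sums on its left side do not
vanish simultaneously. -/
lemma avg_sum (hi : i * i = -1) (hj : j * j = -1) (hji : j * i = -(i * j)) :
    avg I J i j 1 - avg I J i j i * i - avg I J i j j * j + avg I J i j (i * j) * (j * i) = 4 := by
  have h2 : ∀ z, j * (i * z) = -(i * (j * z)) := fun z => by
    rw [← mul_assoc, hji, neg_mul, mul_assoc]
  have h3 : ∀ z, i * (i * z) = -z := fun z => by rw [← mul_assoc, hi]; simp
  simp only [avg, sub_mul, add_mul, mul_assoc, hji, hj, hi, h2, h3, mul_neg, neg_mul, mul_one,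
    neg_neg]
  rw [show (4 : A) = 1 + 1 + 1 + 1 by norm_num]
  abel

end avg

lemma anticomm {x y : HR} (hx : x.re = 0) (hy : y.re = 0) (h : inner ℝ x y = 0) :
    y * x = -(x * y) := by
  rw [Quaternion.inner_def] at h
  have sx := Quaternion.star_eq_neg.2 hx
  have sy := Quaternion.star_eq_neg.2 hy
  rw [sy, mul_neg] at h
  have h' : (x * y).re = 0 := by rwa [Quaternion.re_neg, neg_eq_zero] at h
  have := Quaternion.star_eq_neg.2 h'
  rw [star_mul, sx, sy, neg_mul_neg] at this
  exact this

lemma sq_unit {x : HR} (hx : x.re = 0) (h : ‖x‖ = 1) : x * x = -1 := by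
  have sx := Quaternion.star_eq_neg.2 hx
  have := Quaternion.self_mul_star x
  rw [Quaternion.normSq_eq_norm_mul_self, h, sx] at this
  simp at this
  rw [← this]; simp

/-- A third orthonormal imaginary quaternion is `± I J`. -/
lemma third {I J K : HR} (hI : I.re = 0) (hJ : J.re = 0) (hK : K.re = 0)
    (nI : ‖I‖ = 1) (nJ : ‖J‖ = 1) (nK : ‖K‖ = 1)
    (hIJ : inner ℝ I J = 0) (hIK : inner ℝ I K = 0) (hJK : inner ℝ J K = 0) :
    K = I * J ∨ K = -(I * J) := by
  have aIJ := anticomm hI hJ hIJ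
  have aIK := anticomm hI hK hIK
  have aJK := anticomm hJ hK hJK
  have sI := Quaternion.star_eq_neg.2 hI
  have sJ := Quaternion.star_eq_neg.2 hJ
  have sK := Quaternion.star_eq_neg.2 hK
  have comm : K * (I * J) = I * J * K := by
    rw [← mul_assoc, aIK, neg_mul, mul_assoc, aJK, mul_neg, neg_neg, mul_assoc]
  -- `I J K` is self-conjugate of norm `1`, hence `± 1`
  have hs : star (I * J * K) = I * J * K := by
    rw [star_mul, star_mul, sI, sJ, sK, neg_mul_neg, aIJ, neg_mul_neg, comm]
  have hr := Quaternion.star_eq_self.1 hs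
  have hn : ‖I * J * K‖ = 1 := by rw [norm_mul, norm_mul, nI, nJ, nK]; norm_num
  rw [hr, Quaternion.norm_coe] at hn
  have hsq := sq_unit hK nK
  have hK' : I * J = -((I * J * K).re : HR) * K := by
    rw [← hr, neg_mul, mul_assoc, hsq]; simp
  rcases eq_or_eq_neg_of_abs_eq (by simpa using hn : |(I * J * K).re| = 1) with h | h
  · right; rw [h] at hK'; rw [hK']; simp
  · left; rw [h] at hK'; rw [hK']; simp

/-- A linear isometry `G` of `ℍ` fixing `1` satisfies the quaternion relations on `i, j`, and
`G(k) = ± G(i) G(j)`; for the plus sign `G` is an algebra automorphism. -/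
lemma unit_isometry (G : HR →ₗᵢ[ℝ] HR) (h1 : G 1 = 1) :
    G qi * G qi = -1 ∧ G qj * G qj = -1 ∧ G qj * G qi = -(G qi * G qj) ∧
      (G qk = G qi * G qj ∨ G qk = -(G qi * G qj)) := by
  have hre : ∀ x : HR, (G x).re = x.re := by
    intro x
    have := G.inner_map_map x 1
    rw [h1, Quaternion.inner_def, Quaternion.inner_def] at this
    simpa using this
  have hin : ∀ x y : HR, inner ℝ (G x) (G y) = inner ℝ x y := G.inner_map_map
  have hn : ∀ x : HR, Quaternion.normSq x = 1 → ‖G x‖ = 1 := by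
    intro x hx
    rw [G.norm_map]
    rw [Quaternion.normSq_eq_norm_mul_self] at hx
    nlinarith [norm_nonneg x]
  have rI : (G qi).re = 0 := by rw [hre]; rfl
  have rJ : (G qj).re = 0 := by rw [hre]; rfl
  have rK : (G qk).re = 0 := by rw [hre]; rfl
  have nI : ‖G qi‖ = 1 := hn _ (by simp [Quaternion.normSq_def'])
  have nJ : ‖G qj‖ = 1 := hn _ (by simp [Quaternion.normSq_def'])
  have nK : ‖G qk‖ = 1 := hn _ (by simp [Quaternion.normSq_def'])
  have iIJ : inner ℝ (G qi) (G qj) = 0 := by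
    rw [hin, Quaternion.inner_def]; simp
  have iIK : inner ℝ (G qi) (G qk) = 0 := by
    rw [hin, Quaternion.inner_def]; simp
  have iJK : inner ℝ (G qj) (G qk) = 0 := by
    rw [hin, Quaternion.inner_def]; simp
  exact ⟨sq_unit rI nI, sq_unit rJ nJ, anticomm rI rJ iIJ,
    third rI rJ rK nI nJ nK iIJ iIK iJK⟩

lemma HK_one : inHK 1 := ⟨inK_one, inK_zero, inK_zero, inK_zero⟩
lemma HK_qi : inHK qi := ⟨inK_zero, inK_one, inK_zero, inK_zero⟩
lemma HK_qj : inHK qj := ⟨inK_zero, inK_zero, inK_one, inK_zero⟩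

/-- If `I, J ∈ ℍ(K)` satisfy the relations of `i, j`, some nonzero `p ∈ ℍ(K)` conjugates `i, j`
to `I, J` (an explicit instance of Skolem–Noether). -/
lemma exists_intertwiner {I J : HR} (kI : inHK I) (kJ : inHK J) (hI : I * I = -1)
    (hJ : J * J = -1) (hJI : J * I = -(I * J)) :
    ∃ p : HR, inHK p ∧ p ≠ 0 ∧ I * p = p * qi ∧ J * p = p * qj := by
  have key : ∀ y : HR, inHK y → avg I J qi qj y ≠ 0 →
      ∃ p : HR, inHK p ∧ p ≠ 0 ∧ I * p = p * qi ∧ J * p = p * qj := by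
    intro y ky hy
    refine ⟨avg I J qi qj y, ?_, hy, avg_I hI qi_sq y, avg_J hJ qj_sq hJI qj_qi y⟩
    unfold avg
    exact HK_add (HK_sub (HK_sub ky (HK_mul (HK_mul kI ky) HK_qi))
      (HK_mul (HK_mul kJ ky) HK_qj)) (HK_mul (HK_mul (HK_mul kI kJ) ky) (HK_mul HK_qj HK_qi))
  by_contra hcon
  have z : ∀ y : HR, inHK y → avg I J qi qj y = 0 := by
    intro y ky
    by_contra hy
    exact hcon (key y ky hy)
  have hs := avg_sum (I := I) (J := J) qi_sq qj_sq qj_qi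
  rw [z 1 HK_one, z qi HK_qi, z qj HK_qj, z _ (HK_mul HK_qi HK_qj)] at hs
  have h4 := congrArg QuaternionAlgebra.re hs
  rw [show (4 : HR) = ((4 : ℝ) : HR) by norm_cast] at h4
  simp at h4

/-! ### The parametrisation -/

/-- `1, i, j, k` in terms of the generators of `L`, over `K`. -/
lemma units_eq : (1 : HR) = w₁ ∧ qi = -w₃ ∧
    qk = (Real.sqrt 5)⁻¹ • (-w₃ + (tau - 1) • ((2 : ℝ) • w₂ + w₁ + w₃) - (2 : ℝ) • w₄) ∧
    qj = ((2 : ℝ) • w₂ + w₁ + w₃) - qk := by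
  have h5 : Real.sqrt 5 ≠ 0 := by positivity
  have ht : tau = (1 + Real.sqrt 5) / 2 := rfl
  have hk : qk =
      (Real.sqrt 5)⁻¹ • (-w₃ + (tau - 1) • ((2 : ℝ) • w₂ + w₁ + w₃) - (2 : ℝ) • w₄) := by
    rw [eq_inv_smul_iff₀ h5, ht]
    apply Quaternion.ext <;> simp [ht] <;> ring
  refine ⟨?_, ?_, hk, ?_⟩
  · apply Quaternion.ext <;> simp
  · apply Quaternion.ext <;> simp
  · apply Quaternion.ext <;> simp

lemma T_units_HK (T : HR →ₗ[ℝ] HR) (hT : ∀ x ∈ Lsub, T x ∈ Lsub) :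
    inHK (T 1) ∧ inHK (T qi) ∧ inHK (T qj) ∧ inHK (T qk) := by
  obtain ⟨e1, ei, ek, ej⟩ := units_eq
  have m1 := (L_fixed (hT w₁ (w_mem (by simp)))).1
  have m2 := (L_fixed (hT w₂ (w_mem (by simp)))).1
  have m3 := (L_fixed (hT w₃ (w_mem (by simp)))).1
  have m4 := (L_fixed (hT w₄ (w_mem (by simp)))).1
  have k2 : inK 2 := by exact_mod_cast inK_rat 2
  have hs := HK_add (HK_add (HK_smul k2 m2) m1) m3
  have hk : inHK (T qk) := by
    rw [ek]
    simp only [map_smul, map_add, map_sub, map_neg]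
    exact HK_smul (inK_inv inK_sqrt5)
      (HK_sub (HK_add (HK_neg m3) (HK_smul (inK_sub inK_tau inK_one) hs)) (HK_smul k2 m4))
  refine ⟨by rw [e1]; exact m1, by rw [ei, map_neg]; exact HK_neg m3, ?_, hk⟩
  rw [ej, map_sub]
  refine HK_sub ?_ hk
  simp only [map_smul, map_add]
  exact hs

lemma ext_on_L (S T : HR →ₗ[ℝ] HR) (h : ∀ x ∈ Lsub, S x = T x) (x : HR) : S x = T x := by
  obtain ⟨e1, ei, ek, ej⟩ := units_eq
  have m1 := h w₁ (w_mem (by simp))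
  have m2 := h w₂ (w_mem (by simp))
  have m3 := h w₃ (w_mem (by simp))
  have m4 := h w₄ (w_mem (by simp))
  have hk : S qk = T qk := by
    rw [ek]; simp only [map_smul, map_add, map_sub, map_neg, m1, m2, m3, m4]
  have hj : S qj = T qj := by
    rw [ej]; simp only [map_smul, map_add, map_sub, m1, m2, m3, hk]
  have hi : S qi = T qi := by rw [ei, map_neg, map_neg, m3]
  have h1 : S 1 = T 1 := by rw [e1, m1]
  rw [q_decomp x]
  simp only [map_add, map_smul, h1, hi, hj, hk]

lemma central_real {z : HR} (h : ∀ x : HR, z * x = x * z) : z = (z.re : HR) := by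
  have hi := h qi
  have hj := h qj
  have a := congrArg QuaternionAlgebra.imK hi
  have b := congrArg QuaternionAlgebra.imJ hi
  have c := congrArg QuaternionAlgebra.imK hj
  simp at a b c
  apply Quaternion.ext
  · simp
  · simp; linarith
  · simp; linarith
  · simp; linarith

/-- Orientation-preserving case: if `x ↦ T(x) T(1)⁻¹` is multiplicative and `T` preserves `L`,
then `T(x) = s p x p̃` with `s ∈ ℚ` and `p ∈ ℍ(K)`. -/
lemma param_of_mul (T : HR →ₗ[ℝ] HR) (hT : ∀ x ∈ Lsub, T x ∈ Lsub) (c : HR) (hc : T 1 = c)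
    (c0 : c ≠ 0)
    (hI : T qi * c⁻¹ * (T qi * c⁻¹) = -1) (hJ : T qj * c⁻¹ * (T qj * c⁻¹) = -1)
    (hJI : T qj * c⁻¹ * (T qi * c⁻¹) = -(T qi * c⁻¹ * (T qj * c⁻¹)))
    (hK : T qk * c⁻¹ = T qi * c⁻¹ * (T qj * c⁻¹)) :
    ∃ (p : HR) (s : ℚ), inHK p ∧ p ≠ 0 ∧ ∀ x, T x = (s : ℝ) • (p * x * twist p) := by
  obtain ⟨k1, ki, kj, -⟩ := T_units_HK T hT
  rw [hc] at k1
  have kc := HK_inv k1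
  obtain ⟨p, kp, p0, pi, pj⟩ := exists_intertwiner (HK_mul ki kc) (HK_mul kj kc) hI hJ hJI
  have pk : T qk * c⁻¹ * p = p * qk := by
    rw [hK, mul_assoc _ _ p, pj, ← mul_assoc, pi, mul_assoc, qi_qj]
  set q := p⁻¹ * c with hq
  have kq : inHK q := HK_mul (HK_inv kp) k1
  have q0 : q ≠ 0 := mul_ne_zero (inv_ne_zero p0) c0
  have conv : ∀ x y : HR, y * c⁻¹ * p = p * x → y = p * x * q := by
    intro x y hxy
    rw [← hxy, hq, mul_assoc, ← mul_assoc p, mul_inv_cancel₀ p0, one_mul, mul_assoc,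
      inv_mul_cancel₀ c0, mul_one]
  have hTx : ∀ x, T x = p * x * q := by
    intro x
    have e1 : T 1 = p * 1 * q := conv 1 _ (by rw [hc, mul_inv_cancel₀ c0]; simp)
    have ei := conv _ _ pi
    have ej := conv _ _ pj
    have ek := conv _ _ pk
    conv_lhs => rw [q_decomp x]
    conv_rhs => rw [q_decomp x]
    simp only [map_add, map_smul, e1, ei, ej, ek, mul_add, add_mul, mul_smul_comm, smul_mul_assoc]
  -- twisting `T x = p x q` for `x ∈ L` gives `T x = q̃ x p̃`, first on `L`, then everywhere
  have hTx' : ∀ x, T x = twist q * x * twist p := by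
    intro x
    refine ext_on_L T ((LinearMap.mulRight ℝ (twist p)).comp (LinearMap.mulLeft ℝ (twist q))) ?_ x
    intro x hx
    obtain ⟨kx, tx⟩ := L_fixed hx
    have h := (L_fixed (hT x hx)).2
    rw [hTx, twist_mul (HK_mul kp kx) kq, twist_mul kp kx, tx, ← mul_assoc] at h
    simp [hTx x, ← h]
  have tq0 := twist_ne_zero kq q0
  have tp0 := twist_ne_zero kp p0
  set z := twist p * q⁻¹ with hz
  have hzp : (twist q)⁻¹ * p = z := by
    have h := (hTx 1).symm.trans (hTx' 1)
    rw [mul_one, mul_one] at h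
    rw [hz, inv_mul_eq_iff_eq_mul₀ tq0, ← mul_assoc, ← h, mul_assoc, mul_inv_cancel₀ q0, mul_one]
  have hcen : ∀ x, z * x = x * z := by
    intro x
    have h := (hTx x).symm.trans (hTx' x)
    conv_lhs => rw [← hzp]
    rw [mul_assoc, inv_mul_eq_iff_eq_mul₀ tq0, hz]
    rw [← mul_assoc, ← mul_assoc, ← h, mul_assoc _ q, mul_inv_cancel₀ q0, mul_one]
  have z0 : z ≠ 0 := mul_ne_zero tp0 (inv_ne_zero q0)
  have hzr := central_real hcen
  have r0 : z.re ≠ 0 := by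
    intro h; apply z0; rw [hzr, h]; simp
  have hqz : q = z.re⁻¹ • twist p := by
    rw [eq_inv_smul_iff₀ r0, ← Quaternion.coe_mul_eq_smul, ← hzr, hz, mul_assoc,
      inv_mul_cancel₀ q0, mul_one]
  have hT2 : ∀ x, T x = z.re⁻¹ • (p * x * twist p) := by
    intro x; rw [hTx, hqz, mul_smul_comm]
  have kz : inK z.re⁻¹ := inK_inv (HK_mul (HK_twist kp) (HK_inv kq)).1
  have hgal : gal z.re⁻¹ = z.re⁻¹ := by
    have kpp : inHK (p * twist p) := HK_mul kp (HK_twist kp)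
    have h1L : (1 : HR) ∈ Lsub := by rw [units_eq.1]; exact w_mem (by simp)
    have h := (L_fixed (hT 1 h1L)).2
    rw [hT2 1, mul_one, twist_smul kz kpp, twist_mul kp (HK_twist kp), twist_twist kp] at h
    exact smul_left_injective ℝ (mul_ne_zero p0 tp0) h
  obtain ⟨s, hs⟩ := rat_of_gal_eq kz hgal
  exact ⟨p, s, kp, p0, fun x => by rw [hT2, hs]⟩

/-- Conjugation of quaternions as an `ℝ`-linear map. -/
def starLin : HR →ₗ[ℝ] HR where
  toFun x := star x
  map_add' x y := star_add x y
  map_smul' r x := by simp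

lemma ssl_param (Λ : AddSubgroup HR) (h : IsSSL Λ) :
    ∃ (p : HR) (s : ℚ), inHK p ∧ p ≠ 0 ∧
      (Λ : Set HR) = (fun x => (s : ℝ) • (p * x * twist p)) '' (Lsub : Set HR) := by
  obtain ⟨α, R, hα, hΛ, hle⟩ := h
  let T : HR →ₗ[ℝ] HR := α • R.toLinearEquiv.toLinearMap
  have hTdef : ∀ x, T x = α • R x := fun x => rfl
  have hT : ∀ x ∈ Lsub, T x ∈ Lsub := by
    intro x hx
    apply hle
    have : T x ∈ (Λ : Set HR) := by rw [hΛ]; exact ⟨x, hx, rfl⟩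
    exact this
  have hn : ∀ x, ‖T x‖ = α * ‖x‖ := by
    intro x; rw [hTdef, norm_smul, R.norm_map, Real.norm_of_nonneg hα.le]
  set c := T 1 with hc
  have nc : ‖c‖ = α := by rw [hc, hn]; simp
  have c0 : c ≠ 0 := by rw [← norm_pos_iff, nc]; exact hα
  let G : HR →ₗᵢ[ℝ] HR :=
    { toLinearMap := (LinearMap.mulRight ℝ c⁻¹).comp T
      norm_map' := by
        intro x
        change ‖T x * c⁻¹‖ = ‖x‖
        rw [norm_mul, norm_inv, hn, nc]
        field_simp }
  have hG : ∀ x, G x = T x * c⁻¹ := fun x => rfl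
  obtain ⟨hI, hJ, hJI, hK⟩ := unit_isometry G (by rw [hG, ← hc, mul_inv_cancel₀ c0])
  simp only [hG] at hI hJ hJI hK
  rcases hK with hK | hK
  · obtain ⟨p, s, kp, p0, hp⟩ := param_of_mul T hT c rfl c0 hI hJ hJI hK
    refine ⟨p, s, kp, p0, ?_⟩
    rw [hΛ]
    exact Set.image_congr fun x _ => hp x
  · -- `G` reverses orientation; `T ∘ conj` has the same image since `L` is conjugation-invariant
    let S : HR →ₗ[ℝ] HR := T.comp starLin
    have hS : ∀ x, S x = T (star x) := fun x => rfl
    have Si : S qi = -T qi := by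
      rw [hS, show star qi = -qi by apply Quaternion.ext <;> simp, map_neg]
    have Sj : S qj = -T qj := by
      rw [hS, show star qj = -qj by apply Quaternion.ext <;> simp, map_neg]
    have Sk : S qk = -T qk := by
      rw [hS, show star qk = -qk by apply Quaternion.ext <;> simp, map_neg]
    obtain ⟨p, s, kp, p0, hp⟩ := param_of_mul S (fun x hx => hT _ (star_mem_L hx)) c
      (by rw [hS, star_one]) c0
      (by rw [Si]; simpa using hI) (by rw [Sj]; simpa using hJ)
      (by rw [Si, Sj]; simpa using hJI) (by rw [Si, Sj, Sk, neg_mul, hK]; simp)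
    refine ⟨p, s, kp, p0, ?_⟩
    rw [hΛ]
    ext y
    constructor
    · rintro ⟨x, hx, rfl⟩
      refine ⟨star x, star_mem_L hx, ?_⟩
      change (s : ℝ) • (p * star x * twist p) = α • R x
      rw [← hp, hS, star_star, hTdef]
    · rintro ⟨x, hx, rfl⟩
      refine ⟨star x, star_mem_L hx, ?_⟩
      change α • R (star x) = (s : ℝ) • (p * x * twist p)
      rw [← hp, hS, hTdef]

/-- every SSL of `L` is the image of `L` under `x ↦ α p x p̃`
with `p ∈ 𝕀` an `𝕀`-primitive icosian and `α ∈ ℚ`. -/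
theorem ssl_param_primitive (Λ : AddSubgroup HR) (h : IsSSL Λ) :
    ∃ (p : HR) (α : ℚ), IPrimitive p ∧
      (Λ : Set HR) = (fun x => (α : ℝ) • (p * x * twist p)) '' (Lsub : Set HR) := by
  obtain ⟨p, s, kp, p0, hp⟩ := ssl_param Λ h
  obtain ⟨l, kl, l0, hl⟩ := exists_primitive kp p0
  obtain ⟨n, hn⟩ := norm_rat kl
  have n0 : (n : ℝ) ≠ 0 := by rw [← hn]; exact mul_ne_zero l0 (gal_ne_zero kl l0)
  refine ⟨l • p, s / n, hl, ?_⟩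
  rw [hp]
  refine Set.image_congr fun x _ => ?_
  -- rescaling `p` by `l` multiplies `p x p̃` by the rational norm `n = l l′`
  rw [twist_smul kl kp, smul_mul_assoc, smul_mul_assoc, mul_smul_comm, smul_smul, smul_smul,
    mul_assoc _ l, hn]
  congr 1
  push_cast
  field_simp
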